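/- For z > 0, let P_n(·; z) be the monic orthogonal polynomials for the weight e^{−x⁴} on [−z, z] with recurrence coefficients γ_n(z), assume the coefficients of P_n(·; z) are differentiable in z, and let x_{n,k}(z) ∈ (−z, z) be a differentiable function of z such that x_{n,k}(z) is a simple zero of P_n(·; z) (i.e. P_n(x_{n,k}(z); z) = 0 and ∂_x P_n(x_{n,k}(z); z) ≠ 0) and 𝒜_n(x_{n,k}(z); z) ≠ 0. Then the zero evolves according to the differential equation x′_{n,k}(z) = (x_{n,k}(z)/z)·[ 𝒜_n(z; z) / 𝒜_n(x_{n,k}(z); z) ], where 𝒜_n(z; z) = γ_{n+1}(γ_{n+2} + γ_{n+1} + γ_n) + γ_n(γ_{n+1} + γ_n + γ_{n−1}) − n/2 − 1/4. -/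

import Mathlib

/-!
Fix `z`, let `L q = ∫_{-z}^{z} q(x) e^{-x⁴} dx`, let `p` be the `n`-th monic orthogonal polynomial
and let `Q = p / (X - a)` for a zero `a` of `p`. Orthogonality makes `Q` a reproducing element:
`L (q Q) = q(a) L Q` whenever `deg q ≤ n`. Differentiating `p(a) = 0` and `L (p Q) = 0`
(`Q` frozen) in `z` therefore expresses `a' p'(a) L Q` through the boundary values of `p Q`.
Integrating `(p Q)'` by parts expresses `p'(a) L Q` through the same boundary values and
`L (X³ p Q)`, and integrating `(X p²)'` by parts gives `p(z)²`. The three-term recurrence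
evaluates the remaining moments in terms of `𝒜ₙ`; since `p²` is even, eliminating `p(z)²` and
`p'(a) L Q` leaves `z a' 𝒜ₙ(a; z) = a 𝒜ₙ(z; z)`.
-/

open Polynomial Filter Topology

section Orthogonality

variable {R : Type*} [CommRing R] {L : R[X] →ₗ[R] R}

theorem linearMap_C_mul (L : R[X] →ₗ[R] R) (c : R) (q : R[X]) : L (C c * q) = c * L q := by
  rw [← smul_eq_C_mul, map_smul, smul_eq_mul]

/-- `p` is the `n`-th monic orthogonal polynomial of the moment functional `L`. -/
structure IsMonicOrthogonal (L : R[X] →ₗ[R] R) (n : ℕ) (p : R[X]) : Prop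
    extends IsMonicOfDegree p n where
  map_mul_eq_zero : ∀ q : R[X], q.degree < n → L (p * q) = 0

theorem isMonicOrthogonal_of_pairwise [Nontrivial R] {p : ℕ → R[X]}
    (hp : ∀ n, IsMonicOfDegree (p n) n) (horth : Pairwise fun m n => L (p m * p n) = 0) (n : ℕ) :
    IsMonicOrthogonal L n (p n) where
  toIsMonicOfDegree := hp n
  map_mul_eq_zero q hq := by
    let S : Polynomial.Sequence R :=
      ⟨p, fun i => by rw [degree_eq_natDegree (hp i).ne_zero, (hp i).natDegree_eq]⟩
    have hspan : Submodule.span R (S '' Set.Iio n) = degreeLT R n :=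
      S.span_degreeLT fun i _ => (hp i).leadingCoeff_eq ▸ isUnit_one
    have hker : Submodule.span R (S '' Set.Iio n) ≤ (L ∘ₗ LinearMap.mulLeft R (p n)).ker := by
      rw [Submodule.span_le, Set.image_subset_iff]
      exact fun m (hm : m < n) => horth hm.ne'
    exact hker (hspan ▸ mem_degreeLT.mpr hq)

namespace IsMonicOrthogonal

variable {n : ℕ} {p : R[X]}

theorem coeff_eq_one (hp : IsMonicOrthogonal L n p) : p.coeff n = 1 := by
  rw [← hp.leadingCoeff_eq, leadingCoeff, hp.natDegree_eq]

theorem map_mul_eq_zero_of_isMonicOfDegree [Nontrivial R] (hp : IsMonicOrthogonal L n p) {m : ℕ}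
    {q : R[X]} (hq : IsMonicOfDegree q m) (hmn : m < n) : L (p * q) = 0 := by
  refine hp.map_mul_eq_zero q ?_
  rw [degree_eq_natDegree hq.ne_zero, hq.natDegree_eq]
  exact_mod_cast hmn

theorem map_mul_eq_coeff_mul (hp : IsMonicOrthogonal L n p) {q : R[X]} (hq : q.natDegree ≤ n) :
    L (p * q) = q.coeff n * L (p * p) := by
  have hdeg : (q - C (q.coeff n) * p).degree < n := by
    rw [degree_lt_iff_coeff_zero]
    intro m hm
    rcases hm.eq_or_lt with rfl | hlt
    · simp [hp.coeff_eq_one]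
    · simp [coeff_eq_zero_of_natDegree_lt (hq.trans_lt hlt),
        coeff_eq_zero_of_natDegree_lt (hp.natDegree_eq.trans_lt hlt)]
  calc L (p * q) = L (p * (q - C (q.coeff n) * p) + C (q.coeff n) * (p * p)) := by
        congr 1; ring
    _ = q.coeff n * L (p * p) := by
        rw [map_add, hp.map_mul_eq_zero _ hdeg, zero_add, linearMap_C_mul]

theorem map_mul_eq_of_isMonicOfDegree (hp : IsMonicOrthogonal L n p) {q : R[X]}
    (hq : IsMonicOfDegree q n) : L (p * q) = L (p * p) := by
  rw [hp.map_mul_eq_coeff_mul hq.natDegree_eq.le, ← hq.natDegree_eq, hq.monic.coeff_natDegree,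
    one_mul]

theorem map_mul_X_mul_derivative (hp : IsMonicOrthogonal L n p) :
    L (p * (X * derivative p)) = n * L (p * p) := by
  have hcoeff (m : ℕ) : (X * derivative p).coeff m = m * p.coeff m := by
    cases m with
    | zero => simp
    | succ m => rw [coeff_X_mul, coeff_derivative, Nat.cast_succ, mul_comm]
  have hdeg : (X * derivative p).natDegree ≤ n := by
    rw [natDegree_le_iff_coeff_eq_zero]
    intro m hm
    rw [hcoeff, coeff_eq_zero_of_natDegree_lt (hp.natDegree_eq.trans_lt hm), mul_zero]
  rw [hp.map_mul_eq_coeff_mul hdeg, hcoeff, hp.coeff_eq_one, mul_one]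

theorem degree_divByMonic_X_sub_C_lt [Nontrivial R] (hp : IsMonicOrthogonal L n p) (a : R) :
    (p /ₘ (X - C a)).degree < n := by
  refine (degree_divByMonic_lt p _ hp.ne_zero (by simp)).trans_eq ?_
  rw [degree_eq_natDegree hp.ne_zero, hp.natDegree_eq]

theorem map_mul_divByMonic [Nontrivial R] (hp : IsMonicOrthogonal L n p) {a : R}
    (ha : p.IsRoot a) {q : R[X]} (hq : q.degree ≤ n) :
    L (q * (p /ₘ (X - C a))) = q.eval a * L (p /ₘ (X - C a)) := by
  have hr : (q /ₘ (X - C a)).degree < n := by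
    rcases eq_or_ne q 0 with rfl | hq0
    · simp
    · exact (degree_divByMonic_lt q _ hq0 (by simp)).trans_le hq
  have hq_eq : q = C (q.eval a) + (X - C a) * (q /ₘ (X - C a)) := by
    rw [← modByMonic_X_sub_C_eq_C_eval, modByMonic_add_div]
  calc L (q * (p /ₘ (X - C a)))
      = L (C (q.eval a) * (p /ₘ (X - C a))
          + (X - C a) * (p /ₘ (X - C a)) * (q /ₘ (X - C a))) := by
        congr 1; linear_combination (p /ₘ (X - C a)) * hq_eq
    _ = q.eval a * L (p /ₘ (X - C a)) := by
        rw [mul_divByMonic_eq_iff_isRoot.mpr ha, map_add, hp.map_mul_eq_zero _ hr, add_zero,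
          linearMap_C_mul]

end IsMonicOrthogonal

theorem map_X_pow_mul_add [Nontrivial R] {p : ℕ → R[X]} (hp : ∀ n, IsMonicOrthogonal L n (p n))
    (n k : ℕ) : L (X ^ k * (p (n + k) * p n)) = L (p (n + k) * p (n + k)) := by
  have hmonic : IsMonicOfDegree (X ^ k * p n) (n + k) :=
    add_comm k n ▸ (isMonicOfDegree_X_pow R k).mul (hp n).toIsMonicOfDegree
  rw [mul_left_comm, (hp (n + k)).map_mul_eq_of_isMonicOfDegree hmonic]

end Orthogonality

section Recurrence

variable {R : Type*} [CommRing R]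

/-- The three-term recurrence `x pₙ = pₙ₊₁ + γₙ pₙ₋₁` of a symmetric orthogonal system. For `n = 0`
the truncated index `n - 1 = 0` is harmless because `γ 0 = 0`. -/
structure SymmetricRecurrence (p : ℕ → R[X]) (γ : ℕ → R) : Prop where
  poly_zero : p 0 = 1
  coeff_zero : γ 0 = 0
  X_mul : ∀ n, X * p n = p (n + 1) + C (γ n) * p (n - 1)

namespace SymmetricRecurrence

variable {p : ℕ → R[X]} {γ : ℕ → R} (hrec : SymmetricRecurrence p γ)
include hrec

theorem eval_neg (n : ℕ) (x : R) : (p n).eval (-x) = (-1) ^ n * (p n).eval x := by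
  have hsucc (n : ℕ) (y : R) :
      (p (n + 1)).eval y = y * (p n).eval y - γ n * (p (n - 1)).eval y := by
    have := congrArg (eval y) (hrec.X_mul n)
    simp only [eval_mul, eval_add, eval_X, eval_C] at this
    linear_combination -this
  induction n using Nat.twoStepInduction with
  | zero => simp [hrec.poly_zero]
  | one => simp [hsucc, hrec.poly_zero, hrec.coeff_zero]
  | more n ih ih' =>
    rw [hsucc, hsucc (n + 1) x, Nat.add_sub_cancel, ih, ih']
    ring

theorem eval_neg_sq (n : ℕ) (x : R) : (p n).eval (-x) ^ 2 = (p n).eval x ^ 2 := by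
  rw [hrec.eval_neg, mul_pow, ← pow_mul, mul_comm n 2, pow_mul, neg_one_sq, one_pow, one_mul]

variable {L : R[X] →ₗ[R] R}

theorem map_mul_X_mul (n : ℕ) (q : R[X]) :
    L (q * (X * p n)) = L (q * p (n + 1)) + γ n * L (q * p (n - 1)) := by
  rw [hrec.X_mul, mul_add, map_add, mul_left_comm, linearMap_C_mul]

variable [Nontrivial R] (hp : ∀ n, IsMonicOrthogonal L n (p n))
include hp

theorem coeff_mul_map_mul_pred (n : ℕ) : γ n * L (p n * p (n - 1)) = 0 := by
  cases n with
  | zero => rw [hrec.coeff_zero, zero_mul]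
  | succ n =>
    rw [Nat.add_sub_cancel, (hp (n + 1)).map_mul_eq_zero_of_isMonicOfDegree
      (hp n).toIsMonicOfDegree n.lt_succ_self, mul_zero]

theorem coeff_mul_map_X_pow_mul_pred (n k : ℕ) :
    γ n * L (X ^ (k + 1) * (p (n + k) * p (n - 1))) = γ n * L (p (n + k) * p (n + k)) := by
  cases n with
  | zero => simp only [hrec.coeff_zero, zero_mul]
  | succ n =>
    rw [Nat.add_sub_cancel, Nat.succ_add_eq_add_succ n k, map_X_pow_mul_add hp]

theorem map_mul_self_succ (n : ℕ) : L (p (n + 1) * p (n + 1)) = γ (n + 1) * L (p n * p n) := by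
  have hlt : L (p (n + 2) * p n) = 0 :=
    (hp (n + 2)).map_mul_eq_zero_of_isMonicOfDegree (hp n).toIsMonicOfDegree (by lia)
  calc L (p (n + 1) * p (n + 1)) = L (X ^ 1 * (p (n + 1) * p n)) := (map_X_pow_mul_add hp n 1).symm
    _ = L (p n * (X * p (n + 1))) := by congr 1; ring
    _ = γ (n + 1) * L (p n * p n) := by
        rw [hrec.map_mul_X_mul, mul_comm (p n), hlt, zero_add, Nat.add_sub_cancel]

theorem map_X_mul_self (n : ℕ) : L (X * (p n * p n)) = 0 := by
  have hlt : L (p (n + 1) * p n) = 0 :=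
    (hp (n + 1)).map_mul_eq_zero_of_isMonicOfDegree (hp n).toIsMonicOfDegree n.lt_succ_self
  rw [mul_left_comm, hrec.map_mul_X_mul, mul_comm (p n), hlt, hrec.coeff_mul_map_mul_pred hp,
    add_zero]

theorem map_X_sq_mul_self (n : ℕ) :
    L (X ^ 2 * (p n * p n)) = L (p n * p n) * (γ (n + 1) + γ n) := by
  calc L (X ^ 2 * (p n * p n)) = L (X ^ 1 * p n * (X * p n)) := by congr 1; ring
    _ = L (X ^ 1 * (p (n + 1) * p n)) + γ n * L (X ^ 1 * (p n * p (n - 1))) := by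
        rw [hrec.map_mul_X_mul, mul_assoc, mul_assoc, mul_comm (p n)]
    _ = γ (n + 1) * L (p n * p n) + γ n * L (p n * p n) := by
        rw [map_X_pow_mul_add hp, hrec.map_mul_self_succ hp]
        exact congrArg _ (hrec.coeff_mul_map_X_pow_mul_pred hp n 0)
    _ = L (p n * p n) * (γ (n + 1) + γ n) := by ring

theorem map_X_cube_mul_succ (n : ℕ) :
    L (X ^ 3 * (p (n + 1) * p n)) =
      L (p (n + 1) * p (n + 1)) * (γ (n + 2) + γ (n + 1) + γ n) := by
  calc L (X ^ 3 * (p (n + 1) * p n)) = L (X ^ 2 * p (n + 1) * (X * p n)) := by congr 1; ring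
    _ = L (X ^ 2 * (p (n + 1) * p (n + 1))) + γ n * L (X ^ 2 * (p (n + 1) * p (n - 1))) := by
        rw [hrec.map_mul_X_mul, mul_assoc, mul_assoc]
    _ = L (p (n + 1) * p (n + 1)) * (γ (n + 2) + γ (n + 1) + γ n) := by
        rw [hrec.map_X_sq_mul_self hp, hrec.coeff_mul_map_X_pow_mul_pred hp n 1]
        ring

theorem map_X_pow_four_mul_self (n : ℕ) :
    L (X ^ 4 * (p n * p n)) = L (p n * p n) *
      (γ (n + 1) * (γ (n + 2) + γ (n + 1) + γ n) + γ n * (γ (n + 1) + γ n + γ (n - 1))) := by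
  have hpred : γ n * L (X ^ 3 * (p n * p (n - 1))) =
      γ n * (L (p n * p n) * (γ (n + 1) + γ n + γ (n - 1))) := by
    cases n with
    | zero => simp only [hrec.coeff_zero, zero_mul]
    | succ n => rw [Nat.add_sub_cancel, hrec.map_X_cube_mul_succ hp]
  calc L (X ^ 4 * (p n * p n)) = L (X ^ 3 * p n * (X * p n)) := by congr 1; ring
    _ = L (X ^ 3 * (p (n + 1) * p n)) + γ n * L (X ^ 3 * (p n * p (n - 1))) := by
        rw [hrec.map_mul_X_mul, mul_assoc, mul_assoc, mul_comm (p n) (p (n + 1))]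
    _ = _ := by
        rw [hpred, hrec.map_X_cube_mul_succ hp, hrec.map_mul_self_succ hp]
        ring

theorem map_X_cube_mul_divByMonic (n : ℕ) {a : R} (ha : (p n).IsRoot a) :
    L (X ^ 3 * (p n * (p n /ₘ (X - C a)))) = L (p n * p n) * (γ (n + 1) + γ n + a ^ 2) := by
  have hquot : L (p n * (p n /ₘ (X - C a))) = 0 :=
    (hp n).map_mul_eq_zero _ ((hp n).degree_divByMonic_X_sub_C_lt a)
  have hexpand : X ^ 3 * (p n * (p n /ₘ (X - C a))) =
      X ^ 2 * (p n * p n) + C a * (X * (p n * p n)) + C (a ^ 2) * (p n * p n)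
        + C (a ^ 3) * (p n * (p n /ₘ (X - C a))) := by
    simp only [map_pow]
    linear_combination
      p n * (X ^ 2 + X * C a + C a ^ 2) * mul_divByMonic_eq_iff_isRoot.mpr ha
  rw [hexpand, map_add, map_add, map_add, linearMap_C_mul, linearMap_C_mul, linearMap_C_mul, hquot,
    hrec.map_X_sq_mul_self hp, hrec.map_X_mul_self hp]
  ring

end SymmetricRecurrence

end Recurrence

section MovingPolynomial

variable {𝕜 : Type*} [NontriviallyNormedField 𝕜] {P : 𝕜 → 𝕜[X]} {z : 𝕜}

theorem exists_degree_lt_hasDerivAt_coeff {n : ℕ} (hP : ∀ᶠ s in 𝓝 z, IsMonicOfDegree (P s) n)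
    (hdiff : ∀ k, DifferentiableAt 𝕜 (fun s => (P s).coeff k) z) :
    ∃ D : 𝕜[X], D.degree < n ∧ ∀ k, HasDerivAt (fun s => (P s).coeff k) (D.coeff k) z := by
  refine ⟨∑ k ∈ Finset.range n, C (deriv (fun s => (P s).coeff k) z) * X ^ k, ?_, fun k => ?_⟩
  · rw [← mem_degreeLT]
    refine Submodule.sum_mem _ fun k hk => mem_degreeLT.mpr ?_
    exact (degree_C_mul_X_pow_le k _).trans_lt (by exact_mod_cast Finset.mem_range.mp hk)
  · have hcoeff : (∑ i ∈ Finset.range n, C (deriv (fun s => (P s).coeff i) z) * X ^ i).coeff k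
        = if k < n then deriv (fun s => (P s).coeff k) z else 0 := by
      simp [coeff_X_pow]
    rw [hcoeff]
    split_ifs with hk
    · exact (hdiff k).hasDerivAt
    · refine (hasDerivAt_const z (if k = n then 1 else 0)).congr_of_eventuallyEq ?_
      filter_upwards [hP] with s hs
      split_ifs with hkn
      · rw [hkn, ← hs.leadingCoeff_eq, leadingCoeff, hs.natDegree_eq]
      · exact coeff_eq_zero_of_natDegree_lt (by rw [hs.natDegree_eq]; lia)

theorem hasDerivAt_linearMap_apply {D : 𝕜[X]} {n : ℕ} {φ : 𝕜 → 𝕜[X] →ₗ[𝕜] 𝕜} {φ' : 𝕜[X] → 𝕜}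
    (hdeg : ∀ᶠ s in 𝓝 z, (P s).natDegree ≤ n)
    (hD : ∀ k, HasDerivAt (fun s => (P s).coeff k) (D.coeff k) z)
    (hφ : ∀ q, HasDerivAt (fun s => φ s q) (φ' q) z) :
    HasDerivAt (fun s => φ s (P s)) (φ z D + φ' (P z)) z := by
  have hmap_sum (ψ : 𝕜[X] →ₗ[𝕜] 𝕜) {q : 𝕜[X]} (hq : q.natDegree ≤ n) :
      ψ q = ∑ k ∈ Finset.range (n + 1), q.coeff k * ψ (X ^ k) := by
    conv_lhs => rw [as_sum_range' q (n + 1) (Nat.lt_succ_of_le hq)]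
    simp only [map_sum, ← C_mul_X_pow_eq_monomial, linearMap_C_mul]
  have hDdeg : D.natDegree ≤ n := by
    refine natDegree_le_iff_coeff_eq_zero.mpr fun k hk => ?_
    refine (hD k).unique ((hasDerivAt_const z 0).congr_of_eventuallyEq ?_)
    filter_upwards [hdeg] with s hs using coeff_eq_zero_of_natDegree_lt (hs.trans_lt hk)
  have hsplit : (fun s => φ s (P s)) =ᶠ[𝓝 z] fun s => φ s (P z) +
      ∑ k ∈ Finset.range (n + 1), ((P s).coeff k - (P z).coeff k) * φ s (X ^ k) := by
    filter_upwards [hdeg] with s hs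
    simp only [sub_mul, Finset.sum_sub_distrib, ← hmap_sum (φ s) hs,
      ← hmap_sum (φ s) hdeg.self_of_nhds, add_sub_cancel]
  have hsum := HasDerivAt.fun_sum fun k (_ : k ∈ Finset.range (n + 1)) =>
    ((hD k).sub_const ((P z).coeff k)).mul (hφ (X ^ k))
  refine (((hφ (P z)).add hsum).congr_of_eventuallyEq hsplit).congr_deriv ?_
  simp only [sub_self, zero_mul, add_zero]
  rw [← hmap_sum (φ z) hDdeg, add_comm]

theorem hasDerivAt_eval_comp {D : 𝕜[X]} {n : ℕ} {x : 𝕜 → 𝕜} {x' : 𝕜}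
    (hdeg : ∀ᶠ s in 𝓝 z, (P s).natDegree ≤ n)
    (hD : ∀ k, HasDerivAt (fun s => (P s).coeff k) (D.coeff k) z) (hx : HasDerivAt x x' z) :
    HasDerivAt (fun s => (P s).eval (x s))
      (D.eval (x z) + (derivative (P z)).eval (x z) * x') z :=
  hasDerivAt_linearMap_apply (φ := fun s => leval (x s))
    (φ' := fun q => (derivative q).eval (x z) * x') hdeg hD
    fun q => (q.hasDerivAt (x z)).comp z hx

end MovingPolynomial

section TruncatedMoment

/-- The moment functional `q ↦ ∫ q w` of the weight `w` truncated to `[-z, z]`. -/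
noncomputable def truncatedMoment (w : C(ℝ, ℝ)) (z : ℝ) : ℝ[X] →ₗ[ℝ] ℝ where
  toFun q := ∫ x in (-z)..z, q.eval x * w x
  map_add' p q := by
    simp only [eval_add, add_mul]
    exact intervalIntegral.integral_add (Continuous.intervalIntegrable (by fun_prop) _ _)
      (Continuous.intervalIntegrable (by fun_prop) _ _)
  map_smul' c q := by simp [mul_assoc]

variable {w : C(ℝ, ℝ)} {z : ℝ}

theorem truncatedMoment_apply (w : C(ℝ, ℝ)) (z : ℝ) (q : ℝ[X]) :
    truncatedMoment w z q = ∫ x in (-z)..z, q.eval x * w x := rfl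

theorem truncatedMoment_derivative {v : ℝ[X]} (hw : ∀ x, HasDerivAt w (-(v.eval x) * w x) x)
    (z : ℝ) (q : ℝ[X]) :
    truncatedMoment w z (derivative q) =
      q.eval z * w z - q.eval (-z) * w (-z) + truncatedMoment w z (v * q) := by
  have hparts := intervalIntegral.integral_mul_deriv_eq_deriv_mul (a := -z) (b := z)
    (fun x _ => q.hasDerivAt x) (fun x _ => hw x)
    (Continuous.intervalIntegrable (by fun_prop) _ _)
    (Continuous.intervalIntegrable (by fun_prop) _ _)
  have hv : ∫ x in (-z)..z, q.eval x * (-(v.eval x) * w x) = -truncatedMoment w z (v * q) := by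
    rw [truncatedMoment_apply, ← intervalIntegral.integral_neg]
    congr 1 with x
    rw [eval_mul]
    ring
  rw [hv, ← truncatedMoment_apply] at hparts
  linear_combination hparts

theorem hasDerivAt_truncatedMoment (w : C(ℝ, ℝ)) (z : ℝ) (q : ℝ[X]) :
    HasDerivAt (fun s => truncatedMoment w s q)
      (q.eval z * w z + q.eval (-z) * w (-z)) z := by
  have hcont : Continuous fun x => q.eval x * w x := by fun_prop
  have hprim (y : ℝ) := (hcont.integral_hasStrictDerivAt 0 y).hasDerivAt
  have hsplit : (fun s => truncatedMoment w s q) =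
      fun s => (∫ x in 0..s, q.eval x * w x) - ∫ x in 0..-s, q.eval x * w x := by
    funext s
    rw [intervalIntegral.integral_interval_sub_left (hcont.intervalIntegrable _ _)
      (hcont.intervalIntegrable _ _), truncatedMoment_apply]
  rw [hsplit]
  refine ((hprim z).sub ((hprim (-z)).comp z (hasDerivAt_neg z))).congr_deriv ?_
  ring

theorem hasDerivAt_truncatedMoment_mul {P : ℝ → ℝ[X]} {D : ℝ[X]} {n : ℕ}
    (hdeg : ∀ᶠ s in 𝓝 z, (P s).natDegree ≤ n)
    (hD : ∀ k, HasDerivAt (fun s => (P s).coeff k) (D.coeff k) z) (q : ℝ[X]) :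
    HasDerivAt (fun s => truncatedMoment w s (P s * q))
      (truncatedMoment w z (D * q)
        + ((P z * q).eval z * w z + (P z * q).eval (-z) * w (-z))) z :=
  hasDerivAt_linearMap_apply (φ := fun s => truncatedMoment w s ∘ₗ LinearMap.mulRight ℝ q)
    (φ' := fun r => (r * q).eval z * w z + (r * q).eval (-z) * w (-z)) hdeg hD
    fun r => hasDerivAt_truncatedMoment w z (r * q)

theorem deriv_root_mul_truncatedMoment_divByMonic {P : ℝ → ℝ[X]} {n : ℕ} {x : ℝ → ℝ} {x' : ℝ}
    (hP : ∀ᶠ s in 𝓝 z, IsMonicOrthogonal (truncatedMoment w s) n (P s))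
    (hdiff : ∀ k, DifferentiableAt ℝ (fun s => (P s).coeff k) z) (hx : HasDerivAt x x' z)
    (hroot : ∀ᶠ s in 𝓝 z, (P s).IsRoot (x s)) :
    x' * ((derivative (P z)).eval (x z) * truncatedMoment w z (P z /ₘ (X - C (x z)))) =
      (P z * (P z /ₘ (X - C (x z)))).eval z * w z
        + (P z * (P z /ₘ (X - C (x z)))).eval (-z) * w (-z) := by
  obtain ⟨D, hDdeg, hD⟩ :=
    exists_degree_lt_hasDerivAt_coeff (hP.mono fun s hs => hs.toIsMonicOfDegree) hdiff
  have hdeg : ∀ᶠ s in 𝓝 z, (P s).natDegree ≤ n := hP.mono fun s hs => hs.natDegree_eq.le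
  have hPz := hP.self_of_nhds
  set Q := P z /ₘ (X - C (x z))
  have hroot_deriv : D.eval (x z) + (derivative (P z)).eval (x z) * x' = 0 :=
    (hasDerivAt_eval_comp hdeg hD hx).unique <|
      (hasDerivAt_const z 0).congr_of_eventuallyEq hroot
  have horth_deriv : truncatedMoment w z (D * Q)
      + ((P z * Q).eval z * w z + (P z * Q).eval (-z) * w (-z)) = 0 := by
    refine (hasDerivAt_truncatedMoment_mul hdeg hD Q).unique <|
      (hasDerivAt_const z 0).congr_of_eventuallyEq ?_
    filter_upwards [hP] with s hs
      using hs.map_mul_eq_zero Q (hPz.degree_divByMonic_X_sub_C_lt (x z))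
  have hrepr : truncatedMoment w z (D * Q) = D.eval (x z) * truncatedMoment w z Q :=
    hPz.map_mul_divByMonic hroot.self_of_nhds hDdeg.le
  linear_combination truncatedMoment w z Q * hroot_deriv - horth_deriv + hrepr

end TruncatedMoment

section Freud

theorem sq_sub_sq_mul_eval_mul_divByMonic {R : Type*} [CommRing R] {p : R[X]} {a : R}
    (ha : p.IsRoot a) (z : R) :
    (z ^ 2 - a ^ 2) * (p * (p /ₘ (X - C a))).eval z = (z + a) * p.eval z ^ 2 := by
  have hfactor : (z - a) * (p /ₘ (X - C a)).eval z = p.eval z := by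
    simpa only [eval_mul, eval_sub, eval_X, eval_C] using
      congrArg (eval z) (mul_divByMonic_eq_iff_isRoot.mpr ha)
  rw [eval_mul]
  linear_combination (z + a) * p.eval z * hfactor

/-- The quartic Freud weight `e^{-x⁴}`. -/
noncomputable def freudWeight : C(ℝ, ℝ) where
  toFun x := Real.exp (-x ^ 4)

theorem freudWeight_apply (x : ℝ) : freudWeight x = Real.exp (-x ^ 4) := rfl

theorem freudWeight_neg (x : ℝ) : freudWeight (-x) = freudWeight x := by
  rw [freudWeight_apply, freudWeight_apply, Even.neg_pow (by decide : Even 4)]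

theorem hasDerivAt_freudWeight (x : ℝ) :
    HasDerivAt freudWeight (-((C 4 * X ^ 3 : ℝ[X]).eval x) * freudWeight x) x := by
  refine (hasDerivAt_pow 4 x).fun_neg.exp.congr_deriv ?_
  simp only [freudWeight_apply, eval_mul, eval_C, eval_pow, eval_X]
  ring

/-- The function `𝒜ₙ(x; z)` attached to the recurrence coefficients `γ` at a fixed `z`. -/
noncomputable def freudA (γ : ℕ → ℝ) (n : ℕ) (x z : ℝ) : ℝ :=
  γ (n + 1) * (γ (n + 2) + γ (n + 1) + γ n) + γ n * (γ (n + 1) + γ n + γ (n - 1))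
    + (x ^ 2 - z ^ 2) * (x ^ 2 + γ (n + 1) + γ n) - n / 2 - 1 / 4

namespace SymmetricRecurrence

variable {p : ℕ → ℝ[X]} {γ : ℕ → ℝ} {z : ℝ} (hrec : SymmetricRecurrence p γ)
  (hp : ∀ n, IsMonicOrthogonal (truncatedMoment freudWeight z) n (p n))
include hrec hp

theorem sq_eval_mul_freudWeight (n : ℕ) :
    2 * z * ((p n).eval z ^ 2 * freudWeight z) =
      -4 * truncatedMoment freudWeight z (p n * p n) * freudA γ n z z := by
  have hparts := truncatedMoment_derivative hasDerivAt_freudWeight z (X * (p n * p n))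
  have hderiv : derivative (X * (p n * p n)) =
      p n * p n + C 2 * (p n * (X * derivative (p n))) := by
    simp only [derivative_mul, derivative_X, map_ofNat]
    ring
  have hmoment : (C 4 * X ^ 3 * (X * (p n * p n)) : ℝ[X]) = C 4 * (X ^ 4 * (p n * p n)) := by ring
  rw [hderiv, hmoment, map_add, linearMap_C_mul, linearMap_C_mul,
    (hp n).map_mul_X_mul_derivative, hrec.map_X_pow_four_mul_self hp, freudWeight_neg] at hparts
  simp only [eval_mul, eval_X] at hparts
  rw [freudA]
  linear_combination -hparts - z * freudWeight z * hrec.eval_neg_sq n z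

theorem eval_derivative_mul_truncatedMoment_divByMonic (n : ℕ) {x : ℝ} (hx : (p n).IsRoot x) :
    (derivative (p n)).eval x * truncatedMoment freudWeight z (p n /ₘ (X - C x)) *
        (z ^ 2 - x ^ 2) =
      -4 * truncatedMoment freudWeight z (p n * p n) * freudA γ n x z := by
  have hA := hrec.sq_eval_mul_freudWeight hp n
  have hcube := hrec.map_X_cube_mul_divByMonic hp n hx
  have hbdry := sq_sub_sq_mul_eval_mul_divByMonic hx z
  have hbdry_neg := sq_sub_sq_mul_eval_mul_divByMonic hx (-z)
  have hQdeg := (hp n).degree_divByMonic_X_sub_C_lt x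
  have hderiv_deg : (derivative (p n)).degree ≤ n :=
    degree_derivative_le.trans (degree_le_of_natDegree_le (hp n).natDegree_eq.le)
  have hrepr := (hp n).map_mul_divByMonic hx hderiv_deg
  set Q := p n /ₘ (X - C x)
  have horth : truncatedMoment freudWeight z (p n * derivative Q) = 0 :=
    (hp n).map_mul_eq_zero _ (degree_derivative_le.trans_lt hQdeg)
  have hparts := truncatedMoment_derivative hasDerivAt_freudWeight z (p n * Q)
  rw [derivative_mul, map_add, hrepr, horth, mul_assoc, linearMap_C_mul, hcube, freudWeight_neg]
    at hparts
  rw [freudA] at hA ⊢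
  linear_combination (z ^ 2 - x ^ 2) * hparts + hA
    + freudWeight z * (hbdry - hbdry_neg)
    + freudWeight z * (z - x) * hrec.eval_neg_sq n z

end SymmetricRecurrence

theorem mul_deriv_root_mul_freudA {P : ℕ → ℝ → ℝ[X]} {γ : ℕ → ℝ} {z : ℝ}
    (hP : ∀ᶠ s in 𝓝 z, ∀ n, IsMonicOrthogonal (truncatedMoment freudWeight s) n (P n s))
    (hrec : SymmetricRecurrence (fun n => P n z) γ) {n : ℕ}
    (hnorm : truncatedMoment freudWeight z (P n z * P n z) ≠ 0)
    (hdiff : ∀ k, DifferentiableAt ℝ (fun s => (P n s).coeff k) z) {x : ℝ → ℝ} {x' : ℝ}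
    (hx : HasDerivAt x x' z) (hroot : ∀ᶠ s in 𝓝 z, (P n s).IsRoot (x s)) :
    z * x' * freudA γ n (x z) z = x z * freudA γ n z z := by
  have hmotion :=
    deriv_root_mul_truncatedMoment_divByMonic (hP.mono fun s hs => hs n) hdiff hx hroot
  have hA_z := hrec.sq_eval_mul_freudWeight hP.self_of_nhds n
  have hA_root :=
    hrec.eval_derivative_mul_truncatedMoment_divByMonic hP.self_of_nhds n hroot.self_of_nhds
  have hsq := hrec.eval_neg_sq n z
  have hbdry := sq_sub_sq_mul_eval_mul_divByMonic hroot.self_of_nhds z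
  have hbdry_neg := sq_sub_sq_mul_eval_mul_divByMonic hroot.self_of_nhds (-z)
  rw [freudWeight_neg] at hmotion
  refine mul_left_cancel₀ (mul_ne_zero (by norm_num : (-4 : ℝ) ≠ 0) hnorm) ?_
  linear_combination z * (z ^ 2 - x z ^ 2) * hmotion - z * x' * hA_root + x z * hA_z
    + z * freudWeight z * (hbdry + hbdry_neg) - z * freudWeight z * (z - x z) * hsq

end Freud

/-- Dynamics of the zeros of the monic orthogonal polynomials for the weight
`e^{-x⁴}` on `[-z, z]`: a differentiable simple-zero trajectory `x_{n,k}(z)`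
satisfies `x'_{n,k}(z) = (x_{n,k}(z)/z)·𝒜_n(z;z)/𝒜_n(x_{n,k}(z);z)`. -/
theorem truncated_freud_zero_dynamics
    (P : ℕ → ℝ → Polynomial ℝ) (γ h : ℕ → ℝ → ℝ)
    (hmonic : ∀ n z, 0 < z → (P n z).Monic)
    (hdeg : ∀ n z, 0 < z → (P n z).natDegree = n)
    (horth : ∀ z, 0 < z → ∀ m n, m ≠ n →
      ∫ x in (-z)..z, (P m z).eval x * (P n z).eval x * Real.exp (-x ^ 4) = 0)
    (hh : ∀ n z, 0 < z → h n z = ∫ x in (-z)..z, ((P n z).eval x) ^ 2 * Real.exp (-x ^ 4))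
    (hhpos : ∀ n z, 0 < z → 0 < h n z)
    (hP0 : ∀ z, 0 < z → P 0 z = 1) (hP1 : ∀ z, 0 < z → P 1 z = Polynomial.X)
    (hrec : ∀ n z, 0 < z →
      Polynomial.X * P (n + 1) z = P (n + 2) z + Polynomial.C (γ (n + 1) z) * P n z)
    (hγ0 : ∀ z, 0 < z → γ 0 z = 0)
    (hγ : ∀ n z, 0 < z → γ (n + 1) z = h (n + 1) z / h n z)
    (hdiffP : ∀ n k, DifferentiableOn ℝ (fun w => (P n w).coeff k) (Set.Ioi (0 : ℝ)))
    (A : ℕ → ℝ → ℝ → ℝ)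
    (hA : ∀ m x w, A m x w =
      γ (m + 1) w * (γ (m + 2) w + γ (m + 1) w + γ m w)
        + γ m w * (γ (m + 1) w + γ m w + γ (m - 1) w)
        + (x ^ 2 - w ^ 2) * (x ^ 2 + γ (m + 1) w + γ m w) - (m : ℝ) / 2 - 1 / 4)
    (n : ℕ) (hn : 1 ≤ n)
    (xk : ℝ → ℝ)
    (hxdiff : ∀ z, 0 < z → DifferentiableAt ℝ xk z)
    (hxin : ∀ z, 0 < z → xk z ∈ Set.Ioo (-z) z)
    (hxzero : ∀ z, 0 < z → (P n z).eval (xk z) = 0)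
    (hxsimple : ∀ z, 0 < z → (Polynomial.derivative (P n z)).eval (xk z) ≠ 0)
    (hAne : ∀ z, 0 < z → A n (xk z) z ≠ 0) :
    ∀ z, 0 < z →
      deriv xk z = (xk z / z) * (A n z z / A n (xk z) z) := by
  intro z hz
  have hmonicOrth (s : ℝ) (hs : 0 < s) (m : ℕ) :
      IsMonicOrthogonal (truncatedMoment freudWeight s) m (P m s) :=
    isMonicOrthogonal_of_pairwise (fun i => ⟨hdeg i s hs, hmonic i s hs⟩)
      (fun i j hij => by
        simpa only [truncatedMoment_apply, freudWeight_apply, eval_mul] using horth s hs i j hij) m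
  have hsymm : SymmetricRecurrence (fun m => P m z) (fun m => γ m z) :=
    ⟨hP0 z hz, hγ0 z hz, fun
      | 0 => by simp [hP0 z hz, hP1 z hz, hγ0 z hz]
      | m + 1 => hrec m z hz⟩
  have hnorm : truncatedMoment freudWeight z (P n z * P n z) = h n z := by
    simp only [hh n z hz, truncatedMoment_apply, freudWeight_apply, eval_mul, sq]
  have hpos : ∀ᶠ s in 𝓝 z, 0 < s := lt_mem_nhds hz
  have hzero : z * deriv xk z * A n (xk z) z = xk z * A n z z := by
    simpa only [hA, freudA] using mul_deriv_root_mul_freudA (hpos.mono hmonicOrth) hsymm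
      (hnorm ▸ (hhpos n z hz).ne') (fun k => (hdiffP n k).differentiableAt (Ioi_mem_nhds hz))
      (hxdiff z hz).hasDerivAt (hpos.mono hxzero)
  rw [div_mul_div_comm, eq_div_iff (mul_ne_zero hz.ne' (hAne z hz))]
  linear_combination hzero
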